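/- arXiv:2412.10541 — 2 statements merged into one kernel-verified Lean document; each statement's English description precedes it below -/
import Mathlib

section
/- (Corollary to Theorem 1.) Let m, L, U be positive integers. For each u = 1,…,U let ā_u ∈ ℂ^m, r_u ∈ ℂ^L, and d_u ≥ 0. Let A = [ā_1,…,ā_U] ∈ ℂ^{m×U} and Z = [r_1,…,r_U] ∈ ℂ^{L×U} be the matrices whose u-th columns are ā_u and r_u, respectively. Define the cost g(B) = Σ_{u=1}^U (‖B^H ā_u + r_u‖ − √(d_u))². Let B_t ∈ ℂ^{m×L} satisfy B_t^H ā_u + r_u ≠ 0 for all u, and define D_t = Σ_{u=1}^U [2√(d_u) ā_u (ā_u^H B_t + r_u^H)] / ‖B_t^H ā_u + r_u‖. Then for every B ∈ ℂ^{m×L}, g(B) ≤ ‖B^H A + Z‖_F² − Re{Tr(B^H D_t)} + c, where c = g(B_t) − ‖B_t^H A + Z‖_F² + Re{Tr(B_t^H D_t)}, and equality holds when B = B_t. -/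
open Matrix BigOperators

/-- Euclidean (ℓ2) norm of a complex vector. -/
noncomputable def vnorm {L : ℕ} (v : Fin L → ℂ) : ℝ :=
  Real.sqrt (∑ j, ‖v j‖ ^ 2)

/-- Frobenius norm of a complex matrix. -/
noncomputable def frobNorm {n₁ n₂ : ℕ} (M : Matrix (Fin n₁) (Fin n₂) ℂ) : ℝ :=
  Real.sqrt (∑ i, ∑ j, ‖M i j‖ ^ 2)

theorem vnorm_sq' {L : ℕ} (v : Fin L → ℂ) : vnorm v ^ 2 = ∑ j, ‖v j‖ ^ 2 :=
  Real.sq_sqrt (Finset.sum_nonneg fun _ _ => by positivity)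

theorem cs_aux {L : ℕ} (w v : Fin L → ℂ) :
    (∑ j, w j * star (v j)).re ≤ vnorm w * vnorm v := by
  calc (∑ j, w j * star (v j)).re ≤ ‖∑ j, w j * star (v j)‖ := Complex.re_le_norm _
    _ ≤ ∑ j, ‖w j * star (v j)‖ := norm_sum_le _ _
    _ = ∑ j, ‖w j‖ * ‖v j‖ := by simp
    _ ≤ _ := Real.sum_mul_le_sqrt_mul_sqrt _ _ _

theorem self_aux {L : ℕ} (v : Fin L → ℂ) :
    (∑ j, v j * star (v j)).re = vnorm v ^ 2 := by
  rw [vnorm_sq', Complex.re_sum]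
  refine Finset.sum_congr rfl fun j _ => ?_
  have : v j * star (v j) = ((‖v j‖ ^ 2 : ℝ) : ℂ) := by
    push_cast
    exact Complex.mul_conj' (v j)
  rw [this, Complex.ofReal_re]

theorem vnorm_pos' {L : ℕ} (v : Fin L → ℂ) (h : v ≠ 0) : 0 < vnorm v := by
  obtain ⟨j, hj⟩ := Function.ne_iff.mp h
  refine Real.sqrt_pos.mpr (Finset.sum_pos' (fun _ _ => by positivity) ⟨j, Finset.mem_univ _, ?_⟩)
  have : 0 < ‖v j‖ := norm_pos_iff.mpr hj
  positivity

theorem frob_aux {m L U : ℕ} (a : Fin U → Fin m → ℂ) (r : Fin U → Fin L → ℂ)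
    (B : Matrix (Fin m) (Fin L) ℂ) :
    frobNorm (Bᴴ * (Matrix.of fun i u => a u i) + (Matrix.of fun j u => r u j)) ^ 2
      = ∑ u, vnorm (Bᴴ *ᵥ a u + r u) ^ 2 := by
  unfold frobNorm
  rw [Real.sq_sqrt (Finset.sum_nonneg fun _ _ => Finset.sum_nonneg fun _ _ => by positivity),
    Finset.sum_comm]
  refine Finset.sum_congr rfl fun u _ => ?_
  rw [vnorm_sq']
  rfl

theorem trace_aux {m L U : ℕ} (a : Fin U → Fin m → ℂ) (v : Fin U → Fin L → ℂ) (k : Fin U → ℝ)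
    (B : Matrix (Fin m) (Fin L) ℂ) :
    (Matrix.trace (Bᴴ * ∑ u, Matrix.of (fun i j => (k u : ℂ) * (a u i * star (v u j))))).re
      = ∑ u, k u * (∑ j, (Bᴴ *ᵥ a u) j * star (v u j)).re := by
  rw [Matrix.mul_sum, Matrix.trace_sum, Complex.re_sum]
  refine Finset.sum_congr rfl fun u _ => ?_
  rw [← Complex.re_ofReal_mul]
  congr 1
  simp only [Matrix.trace, Matrix.diag, Matrix.mul_apply, Matrix.of_apply, Matrix.mulVec,
    dotProduct, Finset.mul_sum, Finset.sum_mul]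
  refine Finset.sum_congr rfl fun j _ => Finset.sum_congr rfl fun i _ => ?_
  ring

/-- Corollary to Theorem 1: the beampattern matching cost `g` is majorized at
`Bt` by a convex quadratic function of `B`. -/
theorem stmt2 {m L U : ℕ} (hm : 0 < m) (hL : 0 < L) (hU : 0 < U)
    (a : Fin U → Fin m → ℂ) (r : Fin U → Fin L → ℂ) (d : Fin U → ℝ)
    (hd : ∀ u, 0 ≤ d u)
    (A : Matrix (Fin m) (Fin U) ℂ) (hA : A = Matrix.of fun i u => a u i)
    (Z : Matrix (Fin L) (Fin U) ℂ) (hZ : Z = Matrix.of fun j u => r u j)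
    (g : Matrix (Fin m) (Fin L) ℂ → ℝ)
    (hg : g = fun B => ∑ u, (vnorm (Bᴴ *ᵥ a u + r u) - Real.sqrt (d u)) ^ 2)
    (Bt : Matrix (Fin m) (Fin L) ℂ)
    (hne : ∀ u, Btᴴ *ᵥ a u + r u ≠ 0)
    (Dt : Matrix (Fin m) (Fin L) ℂ)
    (hDt : Dt = ∑ u, Matrix.of (fun i j =>
      ((2 * Real.sqrt (d u) / vnorm (Btᴴ *ᵥ a u + r u) : ℝ) : ℂ) *
        (a u i * star ((Btᴴ *ᵥ a u + r u) j))))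
    (c : ℝ)
    (hc : c = g Bt - frobNorm (Btᴴ * A + Z) ^ 2 + (Matrix.trace (Btᴴ * Dt)).re) :
    (∀ B : Matrix (Fin m) (Fin L) ℂ,
      g B ≤ frobNorm (Bᴴ * A + Z) ^ 2 - (Matrix.trace (Bᴴ * Dt)).re + c) ∧
    g Bt = frobNorm (Btᴴ * A + Z) ^ 2 - (Matrix.trace (Btᴴ * Dt)).re + c := by
  refine ⟨fun B => ?_, by rw [hc]; ring⟩
  subst hA hZ hDt hc hg
  simp only [frob_aux]
  rw [trace_aux a (fun u => Btᴴ *ᵥ a u + r u)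
      (fun u => 2 * Real.sqrt (d u) / vnorm (Btᴴ *ᵥ a u + r u)) B,
    trace_aux a (fun u => Btᴴ *ᵥ a u + r u)
      (fun u => 2 * Real.sqrt (d u) / vnorm (Btᴴ *ᵥ a u + r u)) Bt]
  simp only [← Finset.sum_sub_distrib, ← Finset.sum_add_distrib]
  refine Finset.sum_le_sum fun u _ => ?_
  have hv := vnorm_pos' _ (hne u)
  have h1 := cs_aux (Bᴴ *ᵥ a u + r u) (Btᴴ *ᵥ a u + r u)
  have h2 := self_aux (Btᴴ *ᵥ a u + r u)
  have h3 : (∑ j, (Bᴴ *ᵥ a u) j * star ((Btᴴ *ᵥ a u + r u) j)).re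
      - (∑ j, (Btᴴ *ᵥ a u) j * star ((Btᴴ *ᵥ a u + r u) j)).re
      = (∑ j, (Bᴴ *ᵥ a u + r u) j * star ((Btᴴ *ᵥ a u + r u) j)).re
      - (∑ j, (Btᴴ *ᵥ a u + r u) j * star ((Btᴴ *ᵥ a u + r u) j)).re := by
    rw [← Complex.sub_re, ← Complex.sub_re, ← Finset.sum_sub_distrib, ← Finset.sum_sub_distrib]
    congr 1
    refine Finset.sum_congr rfl fun j _ => ?_
    rw [Pi.add_apply (Bᴴ *ᵥ a u)]
    generalize star ((Btᴴ *ᵥ a u + r u) j) = s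
    rw [Pi.add_apply]
    ring
  have hs := Real.sqrt_nonneg (d u)
  generalize (∑ j, (Bᴴ *ᵥ a u) j * star ((Btᴴ *ᵥ a u + r u) j)).re = x at *
  generalize (∑ j, (Btᴴ *ᵥ a u) j * star ((Btᴴ *ᵥ a u + r u) j)).re = y at *
  generalize vnorm (Btᴴ *ᵥ a u + r u) = q at *
  generalize vnorm (Bᴴ *ᵥ a u + r u) = p at *
  generalize Real.sqrt (d u) = s at *
  have h4 : x - y ≤ (p - q) * q := by rw [h3, h2]; linarith
  have h5 : 2 * s / q * (x - y) ≤ 2 * s / q * ((p - q) * q) :=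
    mul_le_mul_of_nonneg_left h4 (by positivity)
  have h6 : 2 * s / q * ((p - q) * q) = 2 * s * (p - q) := by field_simp
  rw [h6] at h5
  linarith
end

section
/- Let m, L be positive integers, let M ∈ ℂ^{m×m} be Hermitian positive semidefinite, let G ∈ ℂ^{m×L}, let λ ≥ 0 be a real number, and let c > 0. Suppose B* ∈ ℂ^{m×L} satisfies (M + λ I_m) B* = G and ‖B*‖_F² = c. Then B* is a global minimizer of the function f(B) = Re{Tr(B^H M B)} − 2 Re{Tr(B^H G)} over the set {B ∈ ℂ^{m×L} : ‖B‖_F² = c}; that is, for every B with ‖B‖_F² = c, f(B) ≥ f(B*). -/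
open Matrix BigOperators
open scoped ComplexOrder

/-- Squared Frobenius norm of a complex matrix. -/
noncomputable def frobSq {n₁ n₂ : ℕ} (M : Matrix (Fin n₁) (Fin n₂) ℂ) : ℝ :=
  ∑ i, ∑ j, ‖M i j‖ ^ 2

theorem frobSq_eq_trace {n₁ n₂ : ℕ} (M : Matrix (Fin n₁) (Fin n₂) ℂ) :
    (Matrix.trace (Mᴴ * M)).re = frobSq M := by
  unfold frobSq
  rw [Finset.sum_comm]
  simp only [Matrix.trace, Matrix.diag_apply, Matrix.mul_apply, Matrix.conjTranspose_apply,
    Complex.re_sum]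
  refine Finset.sum_congr rfl fun i _ => Finset.sum_congr rfl fun j _ => ?_
  rw [← Complex.normSq_eq_norm_sq, Complex.normSq_apply]
  simp

theorem trace_herm_re {m L : ℕ} (M : Matrix (Fin m) (Fin m) ℂ) (hM : Mᴴ = M)
    (A B : Matrix (Fin m) (Fin L) ℂ) :
    (Matrix.trace (Aᴴ * M * B)).re = (Matrix.trace (Bᴴ * M * A)).re := by
  have h : Bᴴ * M * A = (Aᴴ * M * B)ᴴ := by
    simp [Matrix.conjTranspose_mul, hM, Matrix.mul_assoc]
  rw [h, Matrix.trace_conjTranspose]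
  simp

/-- Global optimality of the KKT point of the trust-region subproblem: if
`(M + λ I) B* = G` with `λ ≥ 0` and `‖B*‖_F² = c`, then `B*` minimizes
`Re Tr(Bᴴ M B) − 2 Re Tr(Bᴴ G)` over the sphere `‖B‖_F² = c`. -/
theorem stmt7 {m L : ℕ} (hm : 0 < m) (hL : 0 < L)
    (M : Matrix (Fin m) (Fin m) ℂ) (hM : M.PosSemidef)
    (G : Matrix (Fin m) (Fin L) ℂ)
    (lam : ℝ) (hlam : 0 ≤ lam) (c : ℝ) (hc : 0 < c)
    (Bstar : Matrix (Fin m) (Fin L) ℂ)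
    (hstat : (M + (lam : ℂ) • (1 : Matrix (Fin m) (Fin m) ℂ)) * Bstar = G)
    (hBc : frobSq Bstar = c) :
    ∀ B : Matrix (Fin m) (Fin L) ℂ, frobSq B = c →
      (Matrix.trace (Bstarᴴ * M * Bstar)).re - 2 * (Matrix.trace (Bstarᴴ * G)).re ≤
        (Matrix.trace (Bᴴ * M * B)).re - 2 * (Matrix.trace (Bᴴ * G)).re := by
  intro B hB
  have h1 : 0 ≤ (Matrix.trace ((B - Bstar)ᴴ * M * (B - Bstar))).re :=
    (Complex.le_def.1 (hM.conjTranspose_mul_mul_same (B - Bstar)).trace_nonneg).1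
  have h2 : 0 ≤ (Matrix.trace ((B - Bstar)ᴴ * (B - Bstar))).re := by
    rw [frobSq_eq_trace]
    unfold frobSq
    positivity
  have h3 := trace_herm_re M hM.1 B Bstar
  have h4 := trace_herm_re (1 : Matrix (Fin m) (Fin m) ℂ) (by simp) B Bstar
  have h5 := frobSq_eq_trace B
  have h6 := frobSq_eq_trace Bstar
  have h7 : ∀ A : Matrix (Fin m) (Fin L) ℂ, (Matrix.trace (Aᴴ * G)).re =
      (Matrix.trace (Aᴴ * M * Bstar)).re + lam * (Matrix.trace (Aᴴ * Bstar)).re := by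
    intro A
    rw [← hstat]
    simp [Matrix.add_mul, Matrix.mul_add, Matrix.mul_assoc]
  rw [h7, h7]
  simp only [Matrix.mul_one] at h4
  simp only [Matrix.conjTranspose_sub, Matrix.sub_mul, Matrix.mul_sub, Matrix.trace_sub,
    Complex.sub_re] at h1 h2
  have h8 := mul_nonneg hlam h2
  rw [h5, h6, hB, hBc, ← h4] at h8
  rw [h6, hBc]
  linarith
end
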